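/- arXiv:2411.10808 — 2 statements merged into one kernel-verified Lean document; each statement's English description precedes it below -/
import Mathlib

section
/- Let P be a real n×n matrix and let R = [[2P, −P], [I_n, 0_n]] be the real 2n×2n block matrix with top-left block 2P, top-right block −P, bottom-left block I_n, and bottom-right block 0_n. If λ ∈ ℂ is a nonzero eigenvalue of R, then λ ≠ 1/2 and μ := λ²/(2λ − 1) is a (complex) eigenvalue of P. -/
open Matrix

/-!
Exchanging the two block rows of `λ - [[A, B], [1, 0]]` puts `-1` in the top-left corner, and the
Schur complement of that corner is `λ² - λA - B`. For `A = aP` and `B = bP` this is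
`λ² - (aλ + b)P`, so `λ` is an eigenvalue of the block matrix exactly when `λ²` is one of
`(aλ + b)P`. If `λ ≠ 0`, this forces `aλ + b ≠ 0`, and dividing by it gives an eigenvalue of `P`.
-/

theorem mem_spectrum_smul_iff_div_mem {K A : Type*} [Field K] [Ring A] [Algebra K A] {x : A}
    {c μ : K} (hμ : μ ≠ 0) :
    μ ∈ spectrum K (c • x) ↔ c ≠ 0 ∧ μ / c ∈ spectrum K x := by
  rcases eq_or_ne c 0 with rfl | hc
  · have hunit : IsUnit (algebraMap K A μ) := (IsUnit.mk0 μ hμ).map (algebraMap K A)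
    simpa [spectrum.mem_iff] using hunit
  · rw [← spectrum.smul_mem_smul_iff (r := Units.mk0 c hc) (s := μ / c)]
    simp [Units.smul_def, mul_div_cancel₀ _ hc, hc]

section BlockMatrix

variable {m R : Type*} [Fintype m] [DecidableEq m] [CommRing R]

theorem isUnit_fromBlocks_iff_of_invertible₂₁ {A B C D : Matrix m m R} [Invertible C] :
    IsUnit (fromBlocks A B C D) ↔ IsUnit (B - A * ⅟C * D) := by
  have hswap : (fromBlocks A B C D).submatrix (Equiv.sumComm m m) (Equiv.refl (m ⊕ m)) =
      fromBlocks C D A B :=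
    fromBlocks_submatrix_sum_swap_left A B C D id
  rw [← isUnit_submatrix_equiv (Equiv.sumComm m m) (Equiv.refl (m ⊕ m)), hswap,
    isUnit_fromBlocks_iff_of_invertible₁₁]

theorem mem_spectrum_fromBlocks_one_zero_iff (A B : Matrix m m R) (r : R) :
    r ∈ spectrum R (fromBlocks A B (1 : Matrix m m R) 0) ↔
      ¬ IsUnit (algebraMap R (Matrix m m R) (r ^ 2) - (r • A + B)) := by
  let : Invertible (1 : Matrix m m R) := invertibleOne
  let : Invertible (-1 : Matrix m m R) := invertibleNeg 1
  have hblocks : algebraMap R (Matrix (m ⊕ m) (m ⊕ m) R) r - fromBlocks A B 1 0 =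
      fromBlocks (r • 1 - A) (-B) (-1) (r • 1) := by
    rw [Algebra.algebraMap_eq_smul_one, ← fromBlocks_one, fromBlocks_smul, sub_eq_add_neg,
      fromBlocks_neg, fromBlocks_add]
    simp [sub_eq_add_neg]
  have hschur : -B - (r • 1 - A) * ⅟(-1) * (r • 1) =
      algebraMap R (Matrix m m R) (r ^ 2) - (r • A + B) := by
    rw [invOf_neg, invOf_one, mul_neg_one, neg_mul, mul_smul_one, smul_sub, smul_smul, ← sq,
      ← Algebra.algebraMap_eq_smul_one]
    abel
  rw [spectrum.mem_iff, hblocks, isUnit_fromBlocks_iff_of_invertible₂₁, hschur]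

theorem mem_spectrum_fromBlocks_smul_smul_iff (P : Matrix m m R) (a b r : R) :
    r ∈ spectrum R (fromBlocks (a • P) (b • P) (1 : Matrix m m R) 0) ↔
      r ^ 2 ∈ spectrum R ((a * r + b) • P) := by
  rw [mem_spectrum_fromBlocks_one_zero_iff, spectrum.mem_iff, smul_smul, ← add_smul, mul_comm r a]

end BlockMatrix

theorem map_fromBlocks_smul_smul_one_zero {m R S : Type*} [DecidableEq m] [Semiring R] [Semiring S]
    (f : R →+* S) (P : Matrix m m R) (a b : R) :
    (fromBlocks (a • P) (b • P) (1 : Matrix m m R) 0).map f =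
      fromBlocks (f a • P.map f) (f b • P.map f) (1 : Matrix m m S) 0 := by
  simp [fromBlocks_map, Matrix.map_smul', Matrix.map_one]

theorem stmt2_general {m R K : Type*} [Fintype m] [DecidableEq m] [Semiring R] [Field K]
    (f : R →+* K) (P : Matrix m m R) (a b : R) {lam : K} (hne : lam ≠ 0) :
    lam ∈ spectrum K ((fromBlocks (a • P) (b • P) (1 : Matrix m m R) 0).map f) ↔
      f a * lam + f b ≠ 0 ∧ lam ^ 2 / (f a * lam + f b) ∈ spectrum K (P.map f) := by
  rw [map_fromBlocks_smul_smul_one_zero, mem_spectrum_fromBlocks_smul_smul_iff,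
    mem_spectrum_smul_iff_div_mem (pow_ne_zero 2 hne)]

theorem stmt2 (n : ℕ) (P : Matrix (Fin n) (Fin n) ℝ) (lam : ℂ)
    (hlam : lam ∈ spectrum ℂ
      ((Matrix.fromBlocks ((2 : ℝ) • P) (-P)
        (1 : Matrix (Fin n) (Fin n) ℝ) (0 : Matrix (Fin n) (Fin n) ℝ)).map Complex.ofReal))
    (hne : lam ≠ 0) :
    lam ≠ 1 / 2 ∧ lam ^ 2 / (2 * lam - 1) ∈ spectrum ℂ (P.map Complex.ofReal) := by
  have hcoe : ⇑Complex.ofRealHom = Complex.ofReal := rfl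
  obtain ⟨hden, hmem⟩ :=
    (stmt2_general Complex.ofRealHom P 2 (-1) hne).1 (by simpa [hcoe] using hlam)
  exact ⟨fun h => hden (by norm_num [h]), by simpa [hcoe, sub_eq_add_neg] using hmem⟩
end

section
/- Let K be a real n×n matrix that is symmetric positive semidefinite, entrywise nonnegative, irreducible, and has K_{ii} > 0 for all 1 ≤ i ≤ n. Let D = diag(K𝟙), let v̂ = D^{−1/2} K D^{−1/2} 𝟙, and let c = ‖v̂‖_∞. Then c > 0, and the matrix W := (1/c) D^{−1/2} K D^{−1/2} + diag(𝟙 − (1/c) v̂) is well-defined, symmetric, stochastic, irreducible, and every eigenvalue of W lies in the interval [0,1]. -/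
open Matrix

/-!
A matrix with the same positive entries as an irreducible one, and possibly more, is irreducible;
hence positive diagonal scaling and adding a nonnegative diagonal preserve irreducibility. Since `c`
bounds the row sums of `S = D^{-1/2} K D^{-1/2}`, the diagonal correction that makes the row sums of
`c⁻¹ S` equal to `1` is nonnegative, so `W` is again positive semidefinite. As `W` is symmetric, its
complex eigenvalues are its real ones: they are nonnegative by semidefiniteness, and at most `1`
because a stochastic matrix has operator norm at most `1` on `ℓ^∞`.
-/

section Irreducible

variable {ι R : Type*} [Ring R] [LinearOrder R] {A B : Matrix ι ι R}

theorem isIrreducible_of_pos_imp_pos (hA : A.IsIrreducible) (hB : ∀ i j, 0 ≤ B i j)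
    (h : ∀ i j, 0 < A i j → 0 < B i j) : B.IsIrreducible := by
  -- `ι` carries two quiver structures here, so neither can be left to instance search.
  let inclusion : @Prefunctor ι A.toQuiver ι B.toQuiver :=
    @Prefunctor.mk _ A.toQuiver _ B.toQuiver id fun e ↦ ⟨h _ _ e.down⟩
  refine ⟨hB, fun i j ↦ ?_⟩
  obtain ⟨p, hp⟩ := hA.connected i j
  refine ⟨@Prefunctor.mapPath _ A.toQuiver _ B.toQuiver inclusion _ _ p, ?_⟩
  cases p with
  | nil => exact hp
  | cons _ _ => exact Nat.succ_pos _

theorem exists_apply_pos_of_isIrreducible (hA : A.IsIrreducible) (i : ι) : ∃ j, 0 < A i j := by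
  obtain ⟨p, hp⟩ := hA.transpose.connected i i
  cases p with
  | nil => exact absurd hp (lt_irrefl 0)
  | cons _ e => exact ⟨_, e.down⟩

variable [Fintype ι] [IsOrderedRing R]

theorem mulVec_one_pos_of_isIrreducible (hA : A.IsIrreducible) (i : ι) : 0 < (A *ᵥ 1) i := by
  obtain ⟨j, hj⟩ := exists_apply_pos_of_isIrreducible hA i
  rw [mulVec, dotProduct_one]
  exact Finset.sum_pos' (fun k _ ↦ hA.nonneg i k) ⟨j, Finset.mem_univ j, hj⟩

end Irreducible

theorem isIrreducible_diagonal_mul_mul_diagonal {ι R : Type*} [Fintype ι] [DecidableEq ι] [Ring R]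
    [LinearOrder R] [IsStrictOrderedRing R] {A : Matrix ι ι R} {d e : ι → R}
    (hA : A.IsIrreducible) (hd : ∀ i, 0 < d i) (he : ∀ i, 0 < e i) :
    (diagonal d * A * diagonal e).IsIrreducible := by
  refine isIrreducible_of_pos_imp_pos hA (fun i j ↦ ?_) fun i j hij ↦ ?_ <;>
    rw [mul_diagonal, diagonal_mul]
  · exact mul_nonneg (mul_nonneg (hd i).le (hA.nonneg i j)) (he j).le
  · exact mul_pos (mul_pos (hd i) hij) (he j)

section SymmNormalization

variable {ι : Type*} [Fintype ι] [DecidableEq ι] {K : Matrix ι ι ℝ}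

/-- The symmetric normalization `D^{-1/2} K D^{-1/2}` of a kernel matrix `K` by its row sums
`D = diag(K𝟙)`. -/
noncomputable def symmNormalization (K : Matrix ι ι ℝ) : Matrix ι ι ℝ :=
  diagonal (fun i ↦ (√((K *ᵥ 1) i))⁻¹) * K * diagonal (fun i ↦ (√((K *ᵥ 1) i))⁻¹)

theorem posSemidef_symmNormalization (hK : K.PosSemidef) : (symmNormalization K).PosSemidef := by
  simpa only [symmNormalization, diagonal_conjTranspose, star_trivial] using
    hK.mul_mul_conjTranspose_same (diagonal fun i ↦ (√((K *ᵥ 1) i))⁻¹)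

theorem isIrreducible_symmNormalization (hK : K.IsIrreducible) :
    (symmNormalization K).IsIrreducible := by
  have hd (i : ι) : 0 < (√((K *ᵥ 1) i))⁻¹ :=
    inv_pos.2 (Real.sqrt_pos.2 (mulVec_one_pos_of_isIrreducible hK i))
  exact isIrreducible_diagonal_mul_mul_diagonal hK hd hd

end SymmNormalization

section RowSumCompletion

variable {ι R : Type*} [Fintype ι] [DecidableEq ι] [Field R] {S : Matrix ι ι R} {c : R}

/-- The matrix `c⁻¹ S + diag(𝟙 - c⁻¹ S𝟙)`, which completes `c⁻¹ S` on the diagonal so that every row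
sums to `1`; for `S = D^{-1/2} K D^{-1/2}` and `c = ‖S𝟙‖_∞` it is the DSG-NLM denoiser. -/
def rowSumCompletion (c : R) (S : Matrix ι ι R) : Matrix ι ι R :=
  c⁻¹ • S + diagonal fun i ↦ 1 - c⁻¹ * (S *ᵥ 1) i

theorem isSymm_rowSumCompletion (hS : S.IsSymm) : (rowSumCompletion c S).IsSymm :=
  (hS.smul _).add (isSymm_diagonal _)

theorem rowSumCompletion_mulVec_one : rowSumCompletion c S *ᵥ 1 = 1 := by
  ext i
  simp [rowSumCompletion, add_mulVec, smul_mulVec, mulVec_diagonal]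

variable [LinearOrder R] [IsStrictOrderedRing R]

theorem inv_mul_apply_le_rowSumCompletion (hc : 0 ≤ c) (hle : ∀ i, (S *ᵥ 1) i ≤ c) (i j : ι) :
    c⁻¹ * S i j ≤ rowSumCompletion c S i j := by
  have hdiag : 0 ≤ diagonal (fun i ↦ 1 - c⁻¹ * (S *ᵥ 1) i) i j := by
    rw [diagonal_apply]
    split_ifs
    exacts [sub_nonneg.2 (inv_mul_le_one_of_le₀ (hle i) hc), le_rfl]
  exact le_add_of_nonneg_right hdiag

theorem rowSumCompletion_mem_rowStochastic (hS : ∀ i j, 0 ≤ S i j) (hc : 0 ≤ c)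
    (hle : ∀ i, (S *ᵥ 1) i ≤ c) : rowSumCompletion c S ∈ rowStochastic R ι :=
  ⟨fun i j ↦ (mul_nonneg (inv_nonneg.2 hc) (hS i j)).trans
    (inv_mul_apply_le_rowSumCompletion hc hle i j), rowSumCompletion_mulVec_one⟩

theorem isIrreducible_rowSumCompletion (hS : S.IsIrreducible) (hc : 0 < c)
    (hle : ∀ i, (S *ᵥ 1) i ≤ c) : (rowSumCompletion c S).IsIrreducible :=
  isIrreducible_of_pos_imp_pos hS (rowSumCompletion_mem_rowStochastic hS.nonneg hc.le hle).1
    fun i j hij ↦ (mul_pos (inv_pos.2 hc) hij).trans_le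
      (inv_mul_apply_le_rowSumCompletion hc.le hle i j)

theorem posSemidef_rowSumCompletion {S : Matrix ι ι ℝ} {c : ℝ} (hS : S.PosSemidef) (hc : 0 ≤ c)
    (hle : ∀ i, (S *ᵥ 1) i ≤ c) : (rowSumCompletion c S).PosSemidef :=
  (hS.smul (inv_nonneg.2 hc)).add
    (.diagonal fun i ↦ sub_nonneg.2 (inv_mul_le_one_of_le₀ (hle i) hc))

end RowSumCompletion

section Spectrum

variable {ι : Type*} [Fintype ι] [DecidableEq ι]

theorem spectrum_map_eq_image_of_splits_charpoly {F E : Type*} [Field F] [Field E] (f : F →+* E)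
    {A : Matrix ι ι F} (hA : A.charpoly.Splits) : spectrum E (A.map f) = f '' spectrum F A := by
  ext μ
  simp only [Set.mem_image, mem_spectrum_iff_isRoot_charpoly, charpoly_map]
  constructor
  · intro hμ
    obtain ⟨r, rfl⟩ := hA.mem_range_of_isRoot A.charpoly_monic.ne_zero hμ
    exact ⟨r, (Polynomial.isRoot_map_iff f.injective).1 hμ, rfl⟩
  · rintro ⟨r, hr, rfl⟩
    exact hr.map

open scoped Matrix.Norms.Operator in
theorem linfty_opNorm_le_one_of_mem_rowStochastic {A : Matrix ι ι ℝ}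
    (hA : A ∈ rowStochastic ℝ ι) : ‖A‖ ≤ 1 := by
  rw [← coe_nnnorm, ← NNReal.coe_one, NNReal.coe_le_coe, linfty_opNNNorm_def]
  refine Finset.sup_le fun i _ ↦ le_of_eq (NNReal.eq ?_)
  calc ((∑ j, ‖A i j‖₊ : NNReal) : ℝ) = ∑ j, |A i j| := by push_cast; rfl
    _ = ∑ j, A i j := Finset.sum_congr rfl fun j _ ↦ abs_of_nonneg (hA.1 i j)
    _ = 1 := sum_row_of_mem_rowStochastic hA i

open scoped Matrix.Norms.Operator in
theorem le_one_of_mem_spectrum_of_mem_rowStochastic {A : Matrix ι ι ℝ} {r : ℝ}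
    (hA : A ∈ rowStochastic ℝ ι) (hr : r ∈ spectrum ℝ A) : r ≤ 1 :=
  calc r ≤ ‖r‖ := Real.le_norm_self r
    _ ≤ ‖A‖ * ‖(1 : Matrix ι ι ℝ)‖ := spectrum.norm_le_norm_mul_of_mem hr
    _ ≤ 1 := mul_le_one₀ (linfty_opNorm_le_one_of_mem_rowStochastic hA) (norm_nonneg _)
      (linfty_opNorm_le_one_of_mem_rowStochastic (one_mem _))

theorem spectrum_map_ofReal_subset_of_posSemidef_of_mem_rowStochastic {A : Matrix ι ι ℝ}
    (hA : A.PosSemidef) (hstoch : A ∈ rowStochastic ℝ ι) :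
    spectrum ℂ (A.map Complex.ofReal) ⊆ Complex.ofReal '' Set.Icc 0 1 := by
  have hspec : spectrum ℂ (A.map Complex.ofReal) = Complex.ofReal '' spectrum ℝ A :=
    spectrum_map_eq_image_of_splits_charpoly Complex.ofRealHom hA.isHermitian.splits_charpoly
  rw [hspec]
  exact Set.image_mono fun r hr ↦ ⟨(posSemidef_iff_isHermitian_and_spectrum_nonneg.1 hA).2 hr,
    le_one_of_mem_spectrum_of_mem_rowStochastic hstoch hr⟩

end Spectrum

theorem stmt14_general {ι : Type*} [Fintype ι] [DecidableEq ι] [Nonempty ι] {S : Matrix ι ι ℝ}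
    (hS : S.PosSemidef) (hirr : S.IsIrreducible) {c : ℝ} (hle : ∀ i, (S *ᵥ 1) i ≤ c)
    {W : Matrix ι ι ℝ} (hW : W = rowSumCompletion c S) :
    0 < c ∧
    W.IsSymm ∧
    (∀ i j, 0 ≤ W i j) ∧ (∀ i, ∑ j, W i j = 1) ∧
    (∀ i j, ∃ k : ℕ, 0 < k ∧ 0 < (W ^ k) i j) ∧
    (∀ μ ∈ spectrum ℂ (W.map Complex.ofReal), ∃ r : ℝ, μ = (r : ℂ) ∧ 0 ≤ r ∧ r ≤ 1) := by
  subst hW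
  obtain ⟨i₀⟩ := ‹Nonempty ι›
  have hc : 0 < c := (mulVec_one_pos_of_isIrreducible hirr i₀).trans_le (hle i₀)
  have hstoch := rowSumCompletion_mem_rowStochastic hirr.nonneg hc.le hle
  have hspec := spectrum_map_ofReal_subset_of_posSemidef_of_mem_rowStochastic
    (posSemidef_rowSumCompletion hS hc.le hle) hstoch
  refine ⟨hc, isSymm_rowSumCompletion (isHermitian_iff_isSymm.1 hS.isHermitian), hstoch.1,
    sum_row_of_mem_rowStochastic hstoch,
    (isIrreducible_iff_exists_pow_pos hstoch.1).1 (isIrreducible_rowSumCompletion hirr hc hle),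
    fun μ hμ ↦ ?_⟩
  obtain ⟨r, ⟨hr₀, hr₁⟩, rfl⟩ := hspec hμ
  exact ⟨r, rfl, hr₀, hr₁⟩

theorem stmt14 (n : ℕ) (hn : 0 < n) (K : Matrix (Fin n) (Fin n) ℝ)
    (hK : K.PosSemidef) (hnonneg : ∀ i j, 0 ≤ K i j)
    (hirr : ∀ i j, ∃ k : ℕ, 0 < k ∧ 0 < (K ^ k) i j)
    (hdiag : ∀ i, 0 < K i i)
    (Dhalf : Matrix (Fin n) (Fin n) ℝ)
    (hDhalf : Dhalf = Matrix.diagonal (fun i => (Real.sqrt ((K *ᵥ fun _ => (1 : ℝ)) i))⁻¹))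
    (vhat : Fin n → ℝ) (hvhat : vhat = (Dhalf * K * Dhalf) *ᵥ fun _ => (1 : ℝ))
    (c : ℝ) (hc : c = ⨆ i, |vhat i|)
    (W : Matrix (Fin n) (Fin n) ℝ)
    (hW : W = c⁻¹ • (Dhalf * K * Dhalf) + Matrix.diagonal (fun i => 1 - c⁻¹ * vhat i)) :
    0 < c ∧
    W.IsSymm ∧
    (∀ i j, 0 ≤ W i j) ∧ (∀ i, ∑ j, W i j = 1) ∧
    (∀ i j, ∃ k : ℕ, 0 < k ∧ 0 < (W ^ k) i j) ∧
    (∀ μ ∈ spectrum ℂ (W.map Complex.ofReal), ∃ r : ℝ, μ = (r : ℂ) ∧ 0 ≤ r ∧ r ≤ 1) := by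
  have : Nonempty (Fin n) := Fin.pos_iff_nonempty.1 hn
  have hKirr : K.IsIrreducible := (isIrreducible_iff_exists_pow_pos hnonneg).2 hirr
  have hle (i : Fin n) : vhat i ≤ c :=
    hc ▸ le_ciSup_of_le (Set.finite_range _).bddAbove i (le_abs_self _)
  subst hDhalf hvhat
  exact stmt14_general (posSemidef_symmNormalization hK) (isIrreducible_symmNormalization hKirr)
    hle hW
end
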